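/- Let m_N(θ) = N/(1−2θ) − (2N/(1−2θ))·1/(((1−θ)/θ)^N + 1) for θ ∈ (0,1)\{1/2}. Then m_N(θ)/N converges pointwise and monotonically (nondecreasing in N) to m̄(θ) = 1/|1−2θ| as N → ∞. -/

import Mathlib

open Filter Topology

/-- Expected exit time of the flat-potential (gambler's ruin) walk from `(-N, N)`. -/
noncomputable def mGR (N : ℕ) (θ : ℝ) : ℝ :=
  (N : ℝ) / (1 - 2 * θ) - (2 * (N : ℝ) / (1 - 2 * θ)) * (1 / (((1 - θ) / θ) ^ N + 1))

/-!
With `ρ = (1 - θ) / θ`, one has `m_N(θ)/N = (1 - 2 / (ρ ^ N + 1)) / (1 - 2θ)`. For `θ < 1/2` the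
ratio `ρ` exceeds `1`, so `ρ ^ N` increases to infinity and the numerator increases to `1`. The
case `θ > 1/2` reduces to this one by reflecting the walk, which exchanges `θ` with `1 - θ` and
leaves the exit time from the symmetric interval unchanged.
-/

section OrderedField

variable {K : Type*} [Field K] [LinearOrder K] [IsStrictOrderedRing K]

theorem monotoneOn_one_sub_two_div_add_one :
    MonotoneOn (fun x : K => 1 - 2 / (x + 1)) (Set.Ioi (-1)) := by
  intro x hx y _ hxy
  have hx_pos : 0 < x + 1 := neg_lt_iff_pos_add.mp hx
  dsimp only
  gcongr

theorem tendsto_one_sub_two_div_add_one_atTop [TopologicalSpace K] [OrderTopology K] :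
    Tendsto (fun x : K => 1 - 2 / (x + 1)) atTop (𝓝 1) := by
  have hdiv : Tendsto (fun x : K => 2 / (x + 1)) atTop (𝓝 0) :=
    (tendsto_atTop_add_const_right _ 1 tendsto_id).const_div_atTop 2
  simpa only [sub_zero] using hdiv.const_sub 1

theorem one_sub_two_div_inv_add_one {x : K} (hx : 0 < x) :
    1 - 2 / (x⁻¹ + 1) = -(1 - 2 / (x + 1)) := by
  field_simp
  ring

end OrderedField

theorem mGR_eq_mul (N : ℕ) (θ : ℝ) :
    mGR N θ = N / (1 - 2 * θ) * (1 - 2 / (((1 - θ) / θ) ^ N + 1)) := by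
  rw [mGR]
  ring

/- The identity survives the junk value `0 / 0 = 0` at `N = 0`: since `ρ ^ 0 = 1`, the right-hand
side vanishes there too. Hence monotonicity holds from `N = 0` on. -/
theorem mGR_div_natCast (N : ℕ) (θ : ℝ) :
    mGR N θ / N = (1 - 2 / (((1 - θ) / θ) ^ N + 1)) / (1 - 2 * θ) := by
  rcases eq_or_ne N 0 with rfl | hN
  · norm_num
  · rw [mGR_eq_mul]
    field_simp

theorem mGR_one_sub (N : ℕ) {θ : ℝ} (h0 : 0 < θ) (h1 : θ < 1) :
    mGR N (1 - θ) = mGR N θ := by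
  have hratio : 0 < (1 - θ) / θ := div_pos (sub_pos.mpr h1) h0
  have hinv : (1 - (1 - θ)) / (1 - θ) = ((1 - θ) / θ)⁻¹ := by rw [sub_sub_cancel, inv_div]
  have hdrift : 1 - 2 * (1 - θ) = -(1 - 2 * θ) := by ring
  rw [mGR_eq_mul, mGR_eq_mul, hinv, inv_pow, one_sub_two_div_inv_add_one (pow_pos hratio N),
    hdrift, div_neg, neg_mul_neg]

theorem one_lt_one_sub_div_self {θ : ℝ} (h0 : 0 < θ) (hθ : θ < 1 / 2) : 1 < (1 - θ) / θ := by
  rw [one_lt_div h0]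
  linarith

theorem monotone_mGR_div_natCast {θ : ℝ} (h0 : 0 < θ) (hθ : θ < 1 / 2) :
    Monotone (fun N : ℕ => mGR N θ / N) := by
  have hratio := one_lt_one_sub_div_self h0 hθ
  have hdrift : 0 ≤ 1 - 2 * θ := by linarith
  have hpow_mem (N : ℕ) : ((1 - θ) / θ) ^ N ∈ Set.Ioi (-1) :=
    neg_one_lt_zero.trans (pow_pos (one_pos.trans hratio) N)
  intro M N hMN
  simp only [mGR_div_natCast]
  exact div_le_div_of_nonneg_right (monotoneOn_one_sub_two_div_add_one (hpow_mem M) (hpow_mem N)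
    (pow_le_pow_right₀ hratio.le hMN)) hdrift

theorem tendsto_mGR_div_natCast {θ : ℝ} (h0 : 0 < θ) (hθ : θ < 1 / 2) :
    Tendsto (fun N : ℕ => mGR N θ / N) atTop (𝓝 (1 / (1 - 2 * θ))) := by
  simp only [mGR_div_natCast]
  exact (tendsto_one_sub_two_div_add_one_atTop.comp
    (tendsto_pow_atTop_atTop_of_one_lt (one_lt_one_sub_div_self h0 hθ))).div_const _

/-- `m_N(θ)/N` is nondecreasing in `N` and converges to `1/|1 - 2θ|`. -/
theorem stmt18 (θ : ℝ) (h0 : 0 < θ) (h1 : θ < 1) (hh : θ ≠ 1 / 2) :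
    Monotone (fun N : ℕ => mGR N θ / (N : ℝ)) ∧
    Tendsto (fun N : ℕ => mGR N θ / (N : ℝ)) atTop (𝓝 (1 / |1 - 2 * θ|)) := by
  wlog hθ : θ < 1 / 2 generalizing θ
  · have habs : |1 - 2 * (1 - θ)| = |1 - 2 * θ| := by
      rw [← abs_neg]
      ring_nf
    have hθ' : 1 - θ < 1 / 2 := by linarith [lt_of_le_of_ne (not_lt.mp hθ) hh.symm]
    simpa only [mGR_one_sub _ h0 h1, habs] using
      this (1 - θ) (by linarith) (by linarith) hθ'.ne hθ'
  · rw [abs_of_pos (by linarith : 0 < 1 - 2 * θ)]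
    exact ⟨monotone_mGR_div_natCast h0 hθ, tendsto_mGR_div_natCast h0 hθ⟩
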